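/- For every integer n ≥ 1, every k ≥ 1 and all real numbers x₁,…,x_k: (1/n!)·Σ_{μ ⊢ n with μᵢ ≤ xᵢ for all 1 ≤ i ≤ k} (f^μ)² ≤ (1/(n−1)!)·Σ_{λ ⊢ n−1 with λᵢ ≤ xᵢ for all 1 ≤ i ≤ k} (f^λ)², where λᵢ denotes the i-th part of λ (equal to 0 when i exceeds the number of nonzero parts). In other words, the Plancherel probability P_n(μ₁ ≤ x₁, …, μ_k ≤ x_k) decreases as n increases. -/

import Mathlib

/-!
The Plancherel measures are linked by a Markov chain, Plancherel growth: from `λ ⊢ n - 1` move to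
`μ ⊢ n` obtained by adding one cell, with probability `f^μ / (n f^λ)`. Since the rows of `μ` are at
least as long as those of `λ`, the event `μᵢ ≤ xᵢ` at time `n` implies the same event at time
`n - 1`.

Unwinding this, `(f^μ)² = ∑_{λ ↗ μ} f^μ f^λ` by the branching rule `numTableaux_eq_sum`; exchanging
the two sums, every `λ` that occurs satisfies the constraints, and its coefficient is at most
`f^λ ∑_{μ ↘ λ} f^μ ≤ n (f^λ)²` by `sum_addable_le`. The latter is proved by induction on `|λ|` from
the branching rule, the commutation of adding and removing distinct cells
(`addable_removable_comm`), and the fact that a diagram has at most one more addable corner than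
removable corners (`card_addable_le`).

The combinatorics takes place on Young diagrams seen as finite sets of cells; `shapeCells` is a
bijection from the partitions of `n` to the diagrams with `n` cells (`shapeCells_injective`,
`exists_partition`).
-/

open scoped BigOperators Classical

/-- The `i`-th largest element (0-indexed) of a multiset of naturals, `0` if absent. -/
def nthPart (μ : Multiset ℕ) (i : ℕ) : ℕ :=
  ((μ.sort (· ≤ ·)).reverse).getD i 0

/-- Cells of the Young diagram whose parts are the multiset `μ`. -/
def shapeCells (μ : Multiset ℕ) : Finset (ℕ × ℕ) :=
  (Finset.range μ.card ×ˢ Finset.range (μ.sum + 1)).filter fun c => c.2 < nthPart μ c.1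

/-- Number of standard Young tableaux of shape `μ` (filled bijectively with `1,…,|μ|`,
strictly increasing along rows and down columns). -/
noncomputable def sytCount (μ : Multiset ℕ) : ℕ :=
  Set.ncard {T : ℕ × ℕ → ℕ |
    (∀ c, c ∉ shapeCells μ → T c = 0) ∧
    Set.BijOn T (shapeCells μ : Set (ℕ × ℕ)) (Set.Icc 1 μ.sum) ∧
    (∀ i j, (i, j + 1) ∈ shapeCells μ → T (i, j) < T (i, j + 1)) ∧
    (∀ i j, (i + 1, j) ∈ shapeCells μ → T (i, j) < T (i + 1, j))}

/-! ### Diagrams, corners and row lengths -/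

/-- Young diagrams, as finite sets of cells `(row, column)` closed under moving one step up or one
step to the left. -/
structure IsDiagram (s : Finset (ℕ × ℕ)) : Prop where
  up : ∀ i j, (i + 1, j) ∈ s → (i, j) ∈ s
  left : ∀ i j, (i, j + 1) ∈ s → (i, j) ∈ s

/-- The removable (inner) corners of a diagram: the cells with no cell below and none to the
right. -/
def removable (s : Finset (ℕ × ℕ)) : Finset (ℕ × ℕ) :=
  s.filter fun c => (c.1 + 1, c.2) ∉ s ∧ (c.1, c.2 + 1) ∉ s

/-- The addable (outer) corners of a diagram: the cells outside it whose upper and left neighbours,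
where they exist, lie in it. The bounding box, which makes this a `Finset`, excludes nothing when
`s` is a diagram (`mem_addable`). -/
def addable (s : Finset (ℕ × ℕ)) : Finset (ℕ × ℕ) :=
  (Finset.range (s.card + 1) ×ˢ Finset.range (s.card + 1)).filter fun c =>
    c ∉ s ∧ (c.1 = 0 ∨ (c.1 - 1, c.2) ∈ s) ∧ (c.2 = 0 ∨ (c.1, c.2 - 1) ∈ s)

theorem IsDiagram.mem_of_le {s : Finset (ℕ × ℕ)} (hs : IsDiagram s) {i j i' j' : ℕ}
    (h : (i, j) ∈ s) (hi : i' ≤ i) (hj : j' ≤ j) : (i', j') ∈ s := by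
  have h1 : (i', j) ∈ s := by
    induction i, hi using Nat.le_induction with
    | base => exact h
    | succ k _ ih => exact ih (hs.up _ _ h)
  induction j, hj using Nat.le_induction with
  | base => exact h1
  | succ k _ ih => exact ih (hs.left _ _ h) (hs.left _ _ h1)

theorem IsDiagram.fst_lt_card {s : Finset (ℕ × ℕ)} (hs : IsDiagram s) {i j : ℕ}
    (h : (i, j) ∈ s) : i < s.card := by
  have hsub : (Finset.range (i + 1)).image (fun a => (a, j)) ⊆ s := by
    intro c hc
    simp only [Finset.mem_image, Finset.mem_range] at hc
    obtain ⟨a, ha, rfl⟩ := hc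
    exact hs.mem_of_le h (by omega) le_rfl
  have := Finset.card_le_card hsub
  rw [Finset.card_image_of_injective _ (fun a b h => by simpa using h), Finset.card_range] at this
  omega

theorem IsDiagram.snd_lt_card {s : Finset (ℕ × ℕ)} (hs : IsDiagram s) {i j : ℕ}
    (h : (i, j) ∈ s) : j < s.card := by
  have hsub : (Finset.range (j + 1)).image (fun a => (i, a)) ⊆ s := by
    intro c hc
    simp only [Finset.mem_image, Finset.mem_range] at hc
    obtain ⟨a, ha, rfl⟩ := hc
    exact hs.mem_of_le h le_rfl (by omega)
  have := Finset.card_le_card hsub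
  rw [Finset.card_image_of_injective _ (fun a b h => by simpa using h), Finset.card_range] at this
  omega

theorem mem_removable {s : Finset (ℕ × ℕ)} {c : ℕ × ℕ} :
    c ∈ removable s ↔ c ∈ s ∧ (c.1 + 1, c.2) ∉ s ∧ (c.1, c.2 + 1) ∉ s := by
  simp [removable]

theorem mem_addable {s : Finset (ℕ × ℕ)} (hs : IsDiagram s) {c : ℕ × ℕ} :
    c ∈ addable s ↔
      c ∉ s ∧ (c.1 = 0 ∨ (c.1 - 1, c.2) ∈ s) ∧ (c.2 = 0 ∨ (c.1, c.2 - 1) ∈ s) := by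
  obtain ⟨i, j⟩ := c
  simp only [addable, Finset.mem_filter, Finset.mem_product, Finset.mem_range, and_iff_right_iff_imp]
  rintro ⟨-, h1, h2⟩
  constructor
  · rcases h1 with h1 | h1
    · omega
    · have := hs.fst_lt_card h1; omega
  · rcases h2 with h2 | h2
    · omega
    · have := hs.snd_lt_card h2; omega

theorem IsDiagram.erase {s : Finset (ℕ × ℕ)} (hs : IsDiagram s) {c : ℕ × ℕ}
    (hc : c ∈ removable s) : IsDiagram (s.erase c) := by
  obtain ⟨i, j⟩ := c
  have := hs.up
  have := hs.left
  rw [mem_removable] at hc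
  constructor <;> grind

theorem mem_removable_insert {s : Finset (ℕ × ℕ)} (hs : IsDiagram s) {c : ℕ × ℕ}
    (hc : c ∈ addable s) : c ∈ removable (insert c s) := by
  obtain ⟨i, j⟩ := c
  have h1 := hs.up i j
  have h2 := hs.left i j
  rw [mem_addable hs] at hc
  rw [mem_removable]
  grind

theorem mem_addable_erase {s : Finset (ℕ × ℕ)} (hs : IsDiagram s) {c : ℕ × ℕ}
    (hc : c ∈ removable s) : c ∈ addable (s.erase c) := by
  rw [mem_addable (hs.erase hc)]
  obtain ⟨i, j⟩ := c
  have h1 := hs.up (i - 1) j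
  have h2 := hs.left i (j - 1)
  rw [mem_removable] at hc
  grind

/-- Adding a cell `c` and then removing a cell `d ≠ c` is possible exactly when removing `d` and
then adding `c` is: both mean that `c` is addable, `d` is removable and `c` is adjacent to `d`
neither on the right nor below. -/
theorem addable_removable_comm {s : Finset (ℕ × ℕ)} (hs : IsDiagram s) (c d : ℕ × ℕ) :
    (c ∈ addable s ∧ d ∈ (removable (insert c s)).erase c) ↔
      (c ∈ (addable (s.erase d)).erase d ∧ d ∈ removable s) := by
  constructor
  · rintro ⟨hc, hd⟩
    have hd' : d ∈ removable s := by
      simp only [Finset.mem_erase, mem_removable] at hd ⊢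
      grind
    refine ⟨?_, hd'⟩
    rw [Finset.mem_erase, mem_addable (hs.erase hd')]
    rw [mem_addable hs] at hc
    simp only [Finset.mem_erase, mem_removable] at hd
    obtain ⟨i, j⟩ := c
    obtain ⟨i', j'⟩ := d
    grind
  · rintro ⟨hc, hd⟩
    rw [Finset.mem_erase, mem_addable (hs.erase hd)] at hc
    have hc' : c ∈ addable s := by
      rw [mem_addable hs]
      grind
    refine ⟨hc', ?_⟩
    rw [mem_addable hs] at hc'
    simp only [Finset.mem_erase, mem_removable] at hd ⊢
    obtain ⟨i, j⟩ := c
    obtain ⟨i', j'⟩ := d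
    grind

/-- The number of cells in row `i`, rows being numbered from `0`. -/
def rowLength (s : Finset (ℕ × ℕ)) (i : ℕ) : ℕ := (s.filter fun c => c.1 = i).card

theorem rowLength_mono {s t : Finset (ℕ × ℕ)} (h : s ⊆ t) (i : ℕ) :
    rowLength s i ≤ rowLength t i :=
  Finset.card_le_card (Finset.filter_subset_filter _ h)

theorem rowLength_eq {s : Finset (ℕ × ℕ)} {i r : ℕ} (h : ∀ j, (i, j) ∈ s ↔ j < r) :
    rowLength s i = r := by
  have : s.filter (fun c => c.1 = i) = (Finset.range r).image (fun j => (i, j)) := by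
    ext ⟨a, b⟩
    simp only [Finset.mem_filter, Finset.mem_image, Finset.mem_range, Prod.mk.injEq]
    constructor
    · rintro ⟨hab, rfl⟩
      exact ⟨b, (h b).1 hab, rfl, rfl⟩
    · rintro ⟨j, hj, rfl, rfl⟩
      exact ⟨(h j).2 hj, rfl⟩
  rw [rowLength, this, Finset.card_image_of_injective _ (fun a b h => by simpa using h),
    Finset.card_range]

theorem IsDiagram.mem_iff {s : Finset (ℕ × ℕ)} (hs : IsDiagram s) (i j : ℕ) :
    (i, j) ∈ s ↔ j < rowLength s i := by
  have hex : ∃ r, (i, r) ∉ s := ⟨s.card, fun h => (hs.snd_lt_card h).false⟩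
  have key : ∀ j, (i, j) ∈ s ↔ j < Nat.find hex := by
    intro j
    constructor
    · intro h
      by_contra! hlt
      exact Nat.find_spec hex (hs.mem_of_le h le_rfl hlt)
    · intro h
      simpa using Nat.find_min hex h
  rw [rowLength_eq key, key]

/-- Apart from the addable corner of row `0`, an addable corner in row `i + 1` forces row `i` to be
strictly longer, so that row `i` ends in a removable corner. -/
theorem card_addable_le {s : Finset (ℕ × ℕ)} (hs : IsDiagram s) :
    (addable s).card ≤ (removable s).card + 1 := by
  have hsub : addable s ⊆ insert (0, rowLength s 0)
      ((removable s).image fun c => (c.1 + 1, rowLength s (c.1 + 1))) := by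
    rintro ⟨i, j⟩ hc
    rw [mem_addable hs] at hc
    simp only [hs.mem_iff] at hc
    have hj : j = rowLength s i := by omega
    subst hj
    rcases i with _ | i
    · simp
    · apply Finset.mem_insert_of_mem
      refine Finset.mem_image.2 ⟨(i, rowLength s i - 1), ?_, rfl⟩
      rw [mem_removable]
      simp only [hs.mem_iff]
      simp at hc
      omega
  calc (addable s).card ≤ _ := Finset.card_le_card hsub
    _ ≤ _ := Finset.card_insert_le _ _
    _ ≤ _ := Nat.add_le_add_right Finset.card_image_le 1

/-! ### Standard tableaux and the branching rule -/

/-- Standard Young tableaux with set of cells `s`, extended by `0` outside `s`. -/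
def tableaux (s : Finset (ℕ × ℕ)) : Set (ℕ × ℕ → ℕ) :=
  {T | (∀ c, c ∉ s → T c = 0) ∧
    Set.BijOn T (s : Set (ℕ × ℕ)) (Set.Icc 1 s.card) ∧
    (∀ i j, (i, j + 1) ∈ s → T (i, j) < T (i, j + 1)) ∧
    (∀ i j, (i + 1, j) ∈ s → T (i, j) < T (i + 1, j))}

/-- The number of standard Young tableaux with set of cells `s`. -/
noncomputable def numTableaux (s : Finset (ℕ × ℕ)) : ℕ := (tableaux s).ncard

/-- Surjectivity onto `1, …, |s|` follows from injectivity by counting, so it need not be checked. -/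
theorem mem_tableaux {s : Finset (ℕ × ℕ)} {T : ℕ × ℕ → ℕ} :
    T ∈ tableaux s ↔ (∀ c, c ∉ s → T c = 0) ∧ (∀ c ∈ s, 1 ≤ T c ∧ T c ≤ s.card) ∧
      (∀ c ∈ s, ∀ d ∈ s, T c = T d → c = d) ∧
      (∀ i j, (i, j + 1) ∈ s → T (i, j) < T (i, j + 1)) ∧
      (∀ i j, (i + 1, j) ∈ s → T (i, j) < T (i + 1, j)) := by
  constructor
  · rintro ⟨h1, h2, h3, h4⟩
    exact ⟨h1, fun c hc => h2.mapsTo hc, fun c hc d hd h => h2.injOn hc hd h, h3, h4⟩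
  · rintro ⟨h1, h2, h2', h3, h4⟩
    have hmaps : Set.MapsTo T (s : Set (ℕ × ℕ)) (Finset.Icc 1 s.card : Finset ℕ) := by
      intro c hc
      simpa using h2 c hc
    have hinj : Set.InjOn T (s : Set (ℕ × ℕ)) := fun c hc d hd h => h2' c hc d hd h
    have hsurj := Finset.surjOn_of_injOn_of_card_le T hmaps hinj (by simp)
    refine ⟨h1, ⟨?_, hinj, ?_⟩, h3, h4⟩
    · simpa using hmaps
    · simpa using hsurj

theorem tableaux_finite (s : Finset (ℕ × ℕ)) : (tableaux s).Finite := by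
  have hf : Function.Injective (fun (T : tableaux s) (c : s) =>
      (⟨T.1 c, Nat.lt_succ_of_le ((mem_tableaux.1 T.2).2.1 c c.2).2⟩ : Fin (s.card + 1))) := by
    intro T T' h
    ext c
    by_cases hc : c ∈ s
    · simpa using congrFun h ⟨c, hc⟩
    · rw [(mem_tableaux.1 T.2).1 c hc, (mem_tableaux.1 T'.2).1 c hc]
  exact Set.finite_coe_iff.1 (Finite.of_injective _ hf)

/-- Erasing the largest entry is a bijection from the tableaux having it at the removable corner `c`
to the tableaux on `s \ {c}`. -/
theorem ncard_tableaux_max {s : Finset (ℕ × ℕ)} {c : ℕ × ℕ}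
    (hc : c ∈ removable s) :
    {T ∈ tableaux s | T c = s.card}.ncard = numTableaux (s.erase c) := by
  rw [mem_removable] at hc
  have hpos : 0 < s.card := Finset.card_pos.2 ⟨c, hc.1⟩
  refine Set.ncard_congr (fun T _ => Function.update T c 0) ?_ ?_ ?_
  · rintro T ⟨hT, hTc⟩
    rw [mem_tableaux] at hT ⊢
    obtain ⟨h1, h2, h3, h4, h5⟩ := hT
    rw [Finset.card_erase_of_mem hc.1]
    simp only [Function.update_apply, Finset.mem_erase]
    refine ⟨by grind, ?_, by grind, by grind, by grind⟩
    rintro d ⟨hdc, hd⟩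
    have := h2 d hd
    have : T d ≠ T c := fun h => hdc (h3 d hd c hc.1 h)
    simp only [hdc, if_false]
    omega
  · rintro T T' ⟨hT, hTc⟩ ⟨hT', hTc'⟩ h
    ext d
    by_cases hd : d = c
    · rw [hd, hTc, hTc']
    · simpa [Function.update_apply, hd] using congrFun h d
  · intro T hT
    rw [mem_tableaux, Finset.card_erase_of_mem hc.1] at hT
    obtain ⟨h1, h2, h3, h4, h5⟩ := hT
    simp only [Finset.mem_erase] at h1 h2 h3 h4 h5
    refine ⟨Function.update T c s.card, ⟨?_, by simp⟩, ?_⟩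
    · rw [mem_tableaux]
      simp only [Function.update_apply]
      refine ⟨by grind, by grind, by grind, ?_, ?_⟩
      · intro i j hij
        by_cases h : (i, j + 1) = c
        · have h' : (i, j) ≠ c := by grind
          have := h2 (i, j)
          have := h1 (i, j)
          simp only [h, h', if_true, if_false]
          grind
        · grind
      · intro i j hij
        by_cases h : (i + 1, j) = c
        · have h' : (i, j) ≠ c := by grind
          have := h2 (i, j)
          have := h1 (i, j)
          simp only [h, h', if_true, if_false]
          grind
        · grind
    · ext d
      simp only [Function.update_apply]
      grind

/-- The branching rule: the largest entry of a standard tableau sits at a removable corner. -/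
theorem numTableaux_eq_sum {s : Finset (ℕ × ℕ)} (hs : s.Nonempty) :
    numTableaux s = ∑ c ∈ removable s, numTableaux (s.erase c) := by
  have hunion : (tableaux_finite s).toFinset =
      (removable s).biUnion fun c => (tableaux_finite s).toFinset.filter fun T => T c = s.card := by
    ext T
    simp only [Finset.mem_biUnion, Finset.mem_filter, Set.Finite.mem_toFinset]
    refine ⟨fun hT => ?_, fun ⟨_, _, h, _⟩ => h⟩
    obtain ⟨c, hc, hTc⟩ := hT.2.1.surjOn (Set.mem_Icc.2 ⟨Finset.card_pos.2 hs, le_rfl⟩)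
    refine ⟨c, ?_, hT, hTc⟩
    obtain ⟨h1, h2, h3, h4, h5⟩ := mem_tableaux.1 hT
    rw [mem_removable]
    refine ⟨hc, fun h => ?_, fun h => ?_⟩
    · have := h5 _ _ h
      have := (h2 _ h).2
      grind
    · have := h4 _ _ h
      have := (h2 _ h).2
      grind
  rw [numTableaux, Set.ncard_eq_toFinset_card _ (tableaux_finite s), hunion, Finset.card_biUnion]
  · refine Finset.sum_congr rfl fun c hc => ?_
    rw [← ncard_tableaux_max hc, ← Set.ncard_coe_finset]
    congr 1
    ext T
    simp
  · intro c hc d hd hcd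
    rw [Function.onFun, Finset.disjoint_left]
    intro T hT hT'
    simp only [Finset.mem_filter, Set.Finite.mem_toFinset] at hT hT'
    exact hcd ((mem_tableaux.1 hT.1).2.2.1 c (mem_removable.1 hc).1 d (mem_removable.1 hd).1
      (hT.2.trans hT'.2.symm))

/-- The upward branching inequality `∑_{ν ↘ λ} f^ν ≤ (|λ| + 1) f^λ` (in fact an equality). Apply the
branching rule to each `ν`: the term returning to `λ` occurs once per addable corner, and in the
other terms addition and removal of cells commute. -/
theorem sum_addable_le (m : ℕ) : ∀ {s : Finset (ℕ × ℕ)}, IsDiagram s → s.card = m →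
    ∑ c ∈ addable s, numTableaux (insert c s) ≤ (m + 1) * numTableaux s := by
  induction m with
  | zero =>
    intro s hs hm
    obtain rfl := Finset.card_eq_zero.1 hm
    have hle := card_addable_le hs
    have hr : removable ∅ = ∅ := by simp [removable]
    rw [hr, Finset.card_empty, zero_add] at hle
    calc _ = ∑ c ∈ addable ∅, numTableaux ∅ := by
          refine Finset.sum_congr rfl fun c hc => ?_
          rw [numTableaux_eq_sum (Finset.insert_nonempty _ _)]
          have : removable {c} = {c} := by
            ext d
            simp only [mem_removable, Finset.mem_singleton]
            grind
          simp [this]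
      _ ≤ _ := by
          rw [Finset.sum_const, smul_eq_mul]
          simpa using Nat.mul_le_mul_right _ hle
  | succ m ih =>
    intro s hs hm
    have hne : s.Nonempty := Finset.card_pos.1 (by omega)
    calc ∑ c ∈ addable s, numTableaux (insert c s)
        = ∑ c ∈ addable s, (numTableaux s +
            ∑ d ∈ (removable (insert c s)).erase c, numTableaux ((insert c s).erase d)) := by
          refine Finset.sum_congr rfl fun c hc => ?_
          rw [numTableaux_eq_sum (Finset.insert_nonempty _ _),
            ← Finset.add_sum_erase _ _ (mem_removable_insert hs hc),
            Finset.erase_insert ((mem_addable hs).1 hc).1]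
      _ = (addable s).card * numTableaux s + ∑ d ∈ removable s,
            ∑ c ∈ (addable (s.erase d)).erase d, numTableaux (insert c (s.erase d)) := by
          rw [Finset.sum_add_distrib, Finset.sum_const, smul_eq_mul]
          congr 1
          rw [Finset.sum_comm' (addable_removable_comm hs)]
          refine Finset.sum_congr rfl fun d hd => Finset.sum_congr rfl fun c hc => ?_
          rw [Finset.erase_insert_of_ne (Finset.mem_erase.1 hc).1]
      _ ≤ ((removable s).card + 1) * numTableaux s + ∑ d ∈ removable s,
            ∑ c ∈ (addable (s.erase d)).erase d, numTableaux (insert c (s.erase d)) := by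
          gcongr
          exact card_addable_le hs
      _ = numTableaux s + ∑ d ∈ removable s,
            ∑ c ∈ addable (s.erase d), numTableaux (insert c (s.erase d)) := by
          rw [add_mul, one_mul, add_comm (_ * _), add_assoc, ← smul_eq_mul, ← Finset.sum_const,
            ← Finset.sum_add_distrib]
          congr 1
          refine Finset.sum_congr rfl fun d hd => ?_
          rw [← Finset.add_sum_erase _ _ (mem_addable_erase hs hd),
            Finset.insert_erase (mem_removable.1 hd).1]
      _ ≤ numTableaux s + ∑ d ∈ removable s, (m + 1) * numTableaux (s.erase d) := by
          gcongr with d hd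
          refine ih (hs.erase hd) ?_
          rw [Finset.card_erase_of_mem (mem_removable.1 hd).1, hm, Nat.add_sub_cancel]
      _ = (m + 1 + 1) * numTableaux s := by
          rw [← Finset.mul_sum, ← numTableaux_eq_sum hne]
          ring

/-! ### Partitions as diagrams -/

theorem sorted_desc (μ : Multiset ℕ) : ((μ.sort (· ≤ ·)).reverse).SortedGE := by
  rw [List.sortedGE_reverse]
  exact (Multiset.pairwise_sort μ _).sortedLE

theorem coe_desc (μ : Multiset ℕ) : (((μ.sort (· ≤ ·)).reverse : List ℕ) : Multiset ℕ) = μ := by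
  rw [Multiset.coe_reverse, Multiset.sort_eq]

theorem nthPart_anti (μ : Multiset ℕ) (i : ℕ) : nthPart μ (i + 1) ≤ nthPart μ i := by
  unfold nthPart
  by_cases h : i + 1 < ((μ.sort (· ≤ ·)).reverse).length
  · rw [List.getD_eq_getElem _ _ h, List.getD_eq_getElem _ _ (by omega)]
    exact (sorted_desc μ).antitone_get (a := ⟨i, by omega⟩) (b := ⟨i + 1, h⟩)
      (by simp [Fin.le_def])
  · rw [List.getD_eq_default _ _ (by omega)]
    exact Nat.zero_le _

theorem sum_nthPart (μ : Multiset ℕ) : ∑ i ∈ Finset.range μ.card, nthPart μ i = μ.sum := by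
  have hlen : μ.card = ((μ.sort (· ≤ ·)).reverse).length := by
    rw [← Multiset.coe_card, coe_desc]
  conv_rhs => rw [← coe_desc μ, Multiset.sum_coe, ← Fin.sum_univ_getElem]
  rw [hlen, Finset.sum_range]
  refine Finset.sum_congr rfl fun i _ => ?_
  rw [nthPart, List.getD_eq_getElem _ _ i.2]

theorem nthPart_pos_lt {μ : Multiset ℕ} {i : ℕ} (h : 0 < nthPart μ i) : i < μ.card := by
  by_contra! hlt
  rw [nthPart, List.getD_eq_default] at h
  · exact h.false
  · rwa [← Multiset.coe_card, coe_desc]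

theorem nthPart_le_sum (μ : Multiset ℕ) (i : ℕ) : nthPart μ i ≤ μ.sum := by
  by_cases h : 0 < nthPart μ i
  · rw [← sum_nthPart]
    exact Finset.single_le_sum (f := nthPart μ) (fun _ _ => Nat.zero_le _)
      (Finset.mem_range.2 (nthPart_pos_lt h))
  · omega

theorem mem_shapeCells (μ : Multiset ℕ) (i j : ℕ) : (i, j) ∈ shapeCells μ ↔ j < nthPart μ i := by
  simp only [shapeCells, Finset.mem_filter, Finset.mem_product, Finset.mem_range,
    and_iff_right_iff_imp]
  intro h
  have := nthPart_le_sum μ i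
  exact ⟨nthPart_pos_lt (by omega), by omega⟩

theorem isDiagram_shapeCells (μ : Multiset ℕ) : IsDiagram (shapeCells μ) := by
  constructor <;> intro i j h <;> rw [mem_shapeCells] at h ⊢
  · exact h.trans_le (nthPart_anti μ i)
  · omega

theorem rowLength_shapeCells (μ : Multiset ℕ) (i : ℕ) :
    rowLength (shapeCells μ) i = nthPart μ i :=
  rowLength_eq (mem_shapeCells μ i)

theorem card_shapeCells (μ : Multiset ℕ) : (shapeCells μ).card = μ.sum := by
  rw [← sum_nthPart, Finset.card_eq_sum_card_fiberwise (f := Prod.fst) (t := Finset.range μ.card)]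
  · exact Finset.sum_congr rfl fun i _ => rowLength_shapeCells μ i
  · rintro ⟨i, j⟩ h
    have := (mem_shapeCells μ i j).1 h
    simpa using nthPart_pos_lt (by omega : 0 < nthPart μ i)

theorem sytCount_eq (μ : Multiset ℕ) : sytCount μ = numTableaux (shapeCells μ) := by
  rw [sytCount, numTableaux, tableaux, card_shapeCells]

theorem desc_coe {l : List ℕ} (h : l.SortedGE) :
    ((l : Multiset ℕ).sort (· ≤ ·)).reverse = l :=
  List.Perm.eq_of_sortedGE (sorted_desc _) h (Multiset.coe_eq_coe.1 (coe_desc _))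

/-- The diagram determines every `nthPart`, hence, the parts being positive, the number of parts and
the parts themselves. -/
theorem shapeCells_injective (n : ℕ) :
    Function.Injective fun μ : Nat.Partition n => shapeCells μ.parts := by
  intro μ ν h
  have hn : ∀ i, nthPart μ.parts i = nthPart ν.parts i := fun i => by
    rw [← rowLength_shapeCells, ← rowLength_shapeCells]
    exact congrArg (rowLength · i) h
  -- If `μ` had more parts than `ν`, its part of index `ν.parts.card` would be `0`.
  have hcard : ∀ {μ ν : Nat.Partition n}, (∀ i, nthPart μ.parts i = nthPart ν.parts i) →
      μ.parts.card ≤ ν.parts.card := by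
    intro μ ν hn
    by_contra! hlt
    have hlen : ν.parts.card < ((μ.parts.sort (· ≤ ·)).reverse).length := by
      rwa [← Multiset.coe_card, coe_desc]
    have hpos : 0 < nthPart μ.parts ν.parts.card := by
      rw [nthPart, List.getD_eq_getElem _ _ hlen]
      apply μ.parts_pos
      have hmem := Multiset.mem_coe.2 (List.getElem_mem hlen)
      rwa [coe_desc] at hmem
    rw [hn] at hpos
    exact (nthPart_pos_lt hpos).false
  have hc := le_antisymm (hcard hn) (hcard fun i => (hn i).symm)
  ext1
  rw [← coe_desc μ.parts, ← coe_desc ν.parts]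
  congr 1
  apply List.ext_getElem
  · rwa [← Multiset.coe_card, ← Multiset.coe_card, coe_desc, coe_desc]
  · intro i h1 h2
    rw [← List.getD_eq_getElem _ 0 h1, ← List.getD_eq_getElem _ 0 h2]
    exact hn i

theorem exists_partition {n : ℕ} {s : Finset (ℕ × ℕ)} (hs : IsDiagram s) (hn : s.card = n) :
    ∃ μ : Nat.Partition n, shapeCells μ.parts = s := by
  let Y : YoungDiagram := ⟨s, by
    rintro ⟨i, j⟩ ⟨i', j'⟩ hle h
    exact hs.mem_of_le h hle.1 hle.2⟩
  have key : shapeCells (Y.rowLens : Multiset ℕ) = s := by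
    ext ⟨i, j⟩
    rw [mem_shapeCells, nthPart, desc_coe Y.rowLens_sorted]
    change _ ↔ (i, j) ∈ Y
    conv_rhs => rw [← Y.ofRowLens_to_rowLens_eq_self, YoungDiagram.mem_ofRowLens]
    by_cases h : i < Y.rowLens.length
    · rw [List.getD_eq_getElem _ _ h]
      exact ⟨fun hj => ⟨h, hj⟩, fun ⟨_, hj⟩ => hj⟩
    · rw [List.getD_eq_default _ _ (by omega)]
      simp only [Nat.not_lt_zero, false_iff, not_exists]
      exact fun h' => absurd h' h
  refine ⟨⟨(Y.rowLens : Multiset ℕ), fun h => Y.pos_of_mem_rowLens _ h, ?_⟩, key⟩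
  rw [← card_shapeCells, key, hn]

/-- The Young diagrams with `n` cells. -/
noncomputable def diagrams (n : ℕ) : Finset (Finset (ℕ × ℕ)) :=
  Finset.univ.image fun μ : Nat.Partition n => shapeCells μ.parts

theorem mem_diagrams {n : ℕ} {s : Finset (ℕ × ℕ)} :
    s ∈ diagrams n ↔ IsDiagram s ∧ s.card = n := by
  simp only [diagrams, Finset.mem_image, Finset.mem_univ, true_and]
  constructor
  · rintro ⟨μ, rfl⟩
    exact ⟨isDiagram_shapeCells _, by rw [card_shapeCells, μ.parts_sum]⟩
  · rintro ⟨hs, hn⟩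
    exact exists_partition hs hn

/-! ### Monotonicity of the Plancherel measure -/

theorem sum_sytCount_sq (n k : ℕ) (x : Fin k → ℝ) :
    ∑ μ ∈ Finset.univ.filter
        (fun μ : Nat.Partition n => ∀ i : Fin k, (nthPart μ.parts (i : ℕ) : ℝ) ≤ x i),
      ((sytCount μ.parts : ℝ)) ^ 2 =
    ((∑ s ∈ (diagrams n).filter (fun s => ∀ i : Fin k, (rowLength s (i : ℕ) : ℝ) ≤ x i),
      numTableaux s ^ 2 : ℕ) : ℝ) := by
  rw [diagrams, Finset.filter_image, Finset.sum_image (shapeCells_injective n).injOn]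
  push_cast
  simp only [sytCount_eq, rowLength_shapeCells]

/-- The unnormalised inequality, for any property `P` inherited by smaller diagrams: write
`(f^μ)² = ∑_{λ ↗ μ} f^μ f^λ` and reorganise the sum according to `λ`, which again satisfies `P`. -/
theorem sum_sq_le (m : ℕ) (P : Finset (ℕ × ℕ) → Prop) [DecidablePred P]
    (hP : ∀ s t, s ⊆ t → P t → P s) :
    ∑ s ∈ (diagrams (m + 1)).filter P, numTableaux s ^ 2 ≤
      (m + 1) * ∑ t ∈ (diagrams m).filter P, numTableaux t ^ 2 := by
  calc ∑ s ∈ (diagrams (m + 1)).filter P, numTableaux s ^ 2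
      = ∑ s ∈ (diagrams (m + 1)).filter P, ∑ c ∈ removable s,
          numTableaux s * numTableaux (s.erase c) := by
        refine Finset.sum_congr rfl fun s hs => ?_
        rw [Finset.mem_filter, mem_diagrams] at hs
        rw [← Finset.mul_sum, ← numTableaux_eq_sum (Finset.card_pos.1 (by omega)), sq]
    _ = ∑ p ∈ ((diagrams (m + 1)).filter P).sigma removable,
          numTableaux p.1 * numTableaux (p.1.erase p.2) := by
        rw [Finset.sum_sigma]
    -- The pair `(μ, c)` with `c` removable becomes `(λ, c)` with `λ = μ \ {c}`.
    _ = ∑ q ∈ (((diagrams (m + 1)).filter P).sigma removable).image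
            (fun p => (⟨p.1.erase p.2, p.2⟩ : (_ : Finset (ℕ × ℕ)) × (ℕ × ℕ))),
          numTableaux (insert q.2 q.1) * numTableaux q.1 := by
        rw [Finset.sum_image]
        · refine Finset.sum_congr rfl fun p hp => ?_
          rw [Finset.insert_erase (mem_removable.1 (Finset.mem_sigma.1 hp).2).1]
        · rintro ⟨s, c⟩ hp ⟨t, d⟩ hq h
          simp only [Sigma.mk.injEq, heq_eq_eq] at h
          obtain ⟨h, rfl⟩ := h
          have hs := Finset.insert_erase (mem_removable.1 (Finset.mem_sigma.1 hp).2).1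
          have ht := Finset.insert_erase (mem_removable.1 (Finset.mem_sigma.1 hq).2).1
          simp only at hs ht
          rw [← hs, ← ht, h]
    -- Passing to all addable `c` forgets the condition `P (insert c λ)`.
    _ ≤ ∑ q ∈ ((diagrams m).filter P).sigma addable,
          numTableaux (insert q.2 q.1) * numTableaux q.1 := by
        refine Finset.sum_le_sum_of_subset ?_
        intro q hq
        obtain ⟨⟨s, c⟩, hp, rfl⟩ := Finset.mem_image.1 hq
        simp only [Finset.mem_sigma, Finset.mem_filter, mem_diagrams] at hp ⊢
        obtain ⟨⟨⟨hs, hcard⟩, hPs⟩, hc⟩ := hp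
        refine ⟨⟨⟨hs.erase hc, ?_⟩, hP _ _ (Finset.erase_subset _ _) hPs⟩, mem_addable_erase hs hc⟩
        rw [Finset.card_erase_of_mem (mem_removable.1 hc).1, hcard, Nat.add_sub_cancel]
    _ = ∑ t ∈ (diagrams m).filter P, (∑ c ∈ addable t, numTableaux (insert c t)) * numTableaux t := by
        rw [Finset.sum_sigma]
        simp only [Finset.sum_mul]
    _ ≤ ∑ t ∈ (diagrams m).filter P, ((m + 1) * numTableaux t) * numTableaux t := by
        gcongr with t ht
        rw [Finset.mem_filter, mem_diagrams] at ht
        exact sum_addable_le m ht.1.1 ht.1.2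
    _ = _ := by
        rw [Finset.mul_sum]
        exact Finset.sum_congr rfl fun t _ => by ring

/-- The Plancherel probability `P_n(μ₁ ≤ x₁, …, μ_k ≤ x_k)` decreases as `n` increases. -/
theorem stmt3 (n k : ℕ) (hn : 1 ≤ n) (hk : 1 ≤ k) (x : Fin k → ℝ) :
    (1 / (n.factorial : ℝ)) *
        ∑ μ ∈ Finset.univ.filter
            (fun μ : Nat.Partition n => ∀ i : Fin k, (nthPart μ.parts (i : ℕ) : ℝ) ≤ x i),
          ((sytCount μ.parts : ℝ)) ^ 2
      ≤ (1 / ((n - 1).factorial : ℝ)) *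
        ∑ lam ∈ Finset.univ.filter
            (fun lam : Nat.Partition (n - 1) =>
              ∀ i : Fin k, (nthPart lam.parts (i : ℕ) : ℝ) ≤ x i),
          ((sytCount lam.parts : ℝ)) ^ 2 := by
  obtain ⟨m, rfl⟩ : ∃ m, n = m + 1 := ⟨n - 1, by omega⟩
  rw [Nat.add_sub_cancel, sum_sytCount_sq, sum_sytCount_sq]
  have key := sum_sq_le m (fun s => ∀ i : Fin k, (rowLength s (i : ℕ) : ℝ) ≤ x i)
    (fun s t hst ht i => (Nat.cast_le.2 (rowLength_mono hst i)).trans (ht i))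
  have key' := (Nat.cast_le (α := ℝ)).2 key
  rw [Nat.cast_mul] at key'
  have hm : (0 : ℝ) < m.factorial := by exact_mod_cast m.factorial_pos
  rw [Nat.factorial_succ, Nat.cast_mul, one_div_mul_eq_div, one_div_mul_eq_div,
    div_le_div_iff₀ (by positivity) hm]
  calc _ ≤ _ := mul_le_mul_of_nonneg_right key' hm.le
    _ = _ := by ring
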